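/- arXiv:2211.06063 — 4 statements merged into one kernel-verified Lean document; each statement's English description precedes it below -/
import Mathlib

section
/- Let h : [0,∞) → [0,∞) be a strictly increasing function with h(0) = 0 such that for every ε > 0 the integral ∫_{(0,ε)} h(x)^{-2} dx = ∞. Then there exists a strictly decreasing sequence (a_n)_{n≥0} of positive real numbers with a_0 = 1, lim_{n→∞} a_n = 0, and ∫_{a_n}^{a_{n-1}} h(x)^{-2} dx = n for every n ≥ 1. -/
open MeasureTheory Filter Topology

/-!
Let `μ` be an atomless measure which is infinite on `(l, b]` but finite on `(x, b]` for `l < x`.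
As `x` decreases from `b` to `l`, the mass `μ (x, b]` increases continuously from `0` to `∞`, so
the intermediate value theorem gives points `a n` with `μ (a n, b] = ∑ i < n, c i`. Consecutive
differences give `μ (a (n + 1), a n] = c n`, and since these partial sums eventually exceed
`μ (x, b]` for each `x > l`, the points `a n` descend to `l`.
For `μ = h⁻² dx` and `l = 0`, finiteness holds because `h⁻²` is bounded by `h(x)⁻²` on `(x, b]`.
-/

open Set
open scoped ENNReal

section LinearOrder

variable {α : Type*} [LinearOrder α] [TopologicalSpace α] [OrderTopology α] [MeasurableSpace α]

lemma exists_mem_Ioo_lt_measure_Ioc [DenselyOrdered α] [FirstCountableTopology α] {μ : Measure α}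
    {l b : α} {r : ℝ≥0∞} (hr : r < μ (Ioc l b)) :
    ∃ x ∈ Ioo l b, r < μ (Ioc x b) := by
  have hlb : l < b := nonempty_Ioc.1 (nonempty_of_measure_ne_zero hr.ne_bot)
  obtain ⟨u, hu_anti, hu_mem, hu_lim⟩ := exists_seq_strictAnti_tendsto' hlb
  have hmono : Monotone fun n => Ioc (u n) b :=
    fun m n hmn => Ioc_subset_Ioc_left (hu_anti.antitone hmn)
  have hsub : Ioc l b ⊆ ⋃ n, Ioc (u n) b := fun x hx =>
    let ⟨n, hn⟩ := (hu_lim.eventually_lt_const hx.1).exists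
    mem_iUnion.2 ⟨n, hn, hx.2⟩
  have hsup : r < ⨆ n, μ (Ioc (u n) b) :=
    hmono.measure_iUnion (μ := μ) ▸ hr.trans_le (measure_mono hsub)
  obtain ⟨n, hn⟩ := lt_iSup_iff.1 hsup
  exact ⟨u n, hu_mem n, hn⟩

lemma measure_Ioc_add_measure_Ioc [OpensMeasurableSpace α]
    (μ : Measure α) {x y z : α} (hxy : x ≤ y) (hyz : y ≤ z) :
    μ (Ioc x y) + μ (Ioc y z) = μ (Ioc x z) := by
  rw [← Ioc_union_Ioc_eq_Ioc hxy hyz,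
    measure_union (Ioc_disjoint_Ioc_of_le le_rfl) measurableSet_Ioc]

end LinearOrder

section Real

variable {μ : Measure ℝ} [NullSingletonClass μ] {l b : ℝ}

lemma continuousOn_measureReal_Ioc_left (hfin : μ (Ioc l b) ≠ ∞) :
    ContinuousOn (fun x => μ.real (Ioc x b)) (Icc l b) := by
  rcases le_or_gt l b with hlb | hbl
  · have hint : IntegrableOn (fun _ => (1 : ℝ)) (uIcc l b) μ := by
      rw [uIcc_of_le hlb, integrableOn_Icc_iff_integrableOn_Ioc]
      exact integrableOn_const hfin
    have hcont := intervalIntegral.continuousOn_primitive_interval_left hint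
    rw [uIcc_of_le hlb] at hcont
    refine hcont.congr fun x hx => ?_
    simp [intervalIntegral.integral_of_le hx.2]
  · simp [Icc_eq_empty_of_lt hbl]

lemma exists_mem_Ioo_measure_Ioc_eq (hfin : ∀ x ∈ Ioo l b, μ (Ioc x b) ≠ ∞) {r : ℝ≥0∞}
    (hr₀ : r ≠ 0) (hr : r < μ (Ioc l b)) :
    ∃ a ∈ Ioo l b, μ (Ioc a b) = r := by
  obtain ⟨x, hx, hrx⟩ := exists_mem_Ioo_lt_measure_Ioc hr
  have hmem : r.toReal ∈ Icc (μ.real (Ioc b b)) (μ.real (Ioc x b)) := by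
    simpa [measureReal_def] using ENNReal.toReal_mono (hfin x hx) hrx.le
  obtain ⟨a, ha, har⟩ :=
    intermediate_value_Icc' hx.2.le (continuousOn_measureReal_Ioc_left (hfin x hx)) hmem
  have hμa : μ (Ioc a b) = r := by
    refine (ENNReal.toReal_eq_toReal_iff' ?_ hr.ne_top).1 har
    exact measure_ne_top_of_subset (Ioc_subset_Ioc_left ha.1) (hfin x hx)
  have hab : a < b := nonempty_Ioc.1 (nonempty_of_measure_ne_zero (hμa ▸ hr₀))
  exact ⟨a, ⟨hx.1.trans_le ha.1, hab⟩, hμa⟩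

lemma exists_seq_measure_Ioc_eq_sum (hfin : ∀ x ∈ Ioo l b, μ (Ioc x b) ≠ ∞) {c : ℕ → ℝ≥0∞}
    (hc : ∀ n, c n ≠ 0) (hsum : ∀ n, ∑ i ∈ Finset.range n, c i < μ (Ioc l b)) :
    ∃ a : ℕ → ℝ, a 0 = b ∧ (∀ n, a n ∈ Ioc l b) ∧
      ∀ n, μ (Ioc (a n) b) = ∑ i ∈ Finset.range n, c i := by
  have hne (n : ℕ) : ∑ i ∈ Finset.range (n + 1), c i ≠ 0 := by
    simp [Finset.sum_range_succ, hc n]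
  have hlb : l < b := nonempty_Ioc.1 (nonempty_of_measure_ne_zero (hsum 0).ne_bot)
  choose a ha_mem ha using fun n => exists_mem_Ioo_measure_Ioc_eq hfin (hne n) (hsum (n + 1))
  refine ⟨fun n => n.casesOn b a, rfl, ?_, ?_⟩
  · rintro (_ | n)
    exacts [⟨hlb, le_rfl⟩, Ioo_subset_Ioc_self (ha_mem n)]
  · rintro (_ | n)
    exacts [by simp, ha n]

theorem exists_strictAnti_tendsto_measure_Ioc_eq {c : ℕ → ℝ≥0∞} (hc : ∀ n, c n ≠ 0)
    (hsum : ∀ n, ∑ i ∈ Finset.range n, c i < μ (Ioc l b))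
    (htsum : ∀ x ∈ Ioo l b, μ (Ioc x b) < ∑' n, c n) :
    ∃ a : ℕ → ℝ, a 0 = b ∧ StrictAnti a ∧ (∀ n, l < a n) ∧ Tendsto a atTop (𝓝 l) ∧
      ∀ n, μ (Ioc (a (n + 1)) (a n)) = c n := by
  obtain ⟨a, ha₀, ha_mem, ha⟩ :=
    exists_seq_measure_Ioc_eq_sum (fun x hx => (htsum x hx).ne_top) hc hsum
  have lt_of_measure_lt {x y : ℝ} (hxy : μ (Ioc x b) < μ (Ioc y b)) : y < x :=
    lt_of_not_ge fun hle => hxy.not_ge (measure_mono (Ioc_subset_Ioc_left hle))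
  have hanti : StrictAnti a := strictAnti_nat_of_succ_lt fun n => lt_of_measure_lt <| by
    rw [ha, ha, Finset.sum_range_succ]
    exact ENNReal.lt_add_right (hsum n).ne_top (hc n)
  refine ⟨a, ha₀, hanti, fun n => (ha_mem n).1, ?_, fun n => ?_⟩
  · refine tendsto_order.2 ⟨fun x hx => .of_forall fun n => hx.trans (ha_mem n).1, fun x hx => ?_⟩
    rcases lt_or_ge x b with hxb | hbx
    · have hsum_gt := (ENNReal.tendsto_nat_tsum c).eventually_const_lt (htsum x ⟨hx, hxb⟩)
      filter_upwards [hsum_gt] with n hn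
      exact lt_of_measure_lt ((ha n).symm ▸ hn)
    · filter_upwards [eventually_gt_atTop 0] with n hn
      exact (hanti hn).trans_le (ha₀ ▸ hbx)
  · have hadd := measure_Ioc_add_measure_Ioc μ (hanti n.lt_succ_self).le (ha_mem n).2
    rw [ha, ha, Finset.sum_range_succ, add_comm] at hadd
    exact (ENNReal.add_right_inj (hsum n).ne_top).1 hadd

end Real

lemma setLIntegral_Ioc_inv_pow_ne_top {μ : Measure ℝ} [IsLocallyFiniteMeasure μ] {h : ℝ → ℝ}
    {x b : ℝ} (h_mono : MonotoneOn h (Icc x b)) (hx : 0 < h x) (p : ℕ) :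
    ∫⁻ y in Ioc x b, ENNReal.ofReal ((h y ^ p)⁻¹) ∂μ ≠ ∞ := by
  refine (setLIntegral_lt_top_of_le_nnreal measure_Ioc_lt_top.ne
    ⟨((h x ^ p)⁻¹).toNNReal, fun y hy => ?_⟩).ne
  have hxy : h x ≤ h y :=
    h_mono (left_mem_Icc.2 (hy.1.le.trans hy.2)) (Ioc_subset_Icc_self hy) hy.1.le
  exact ENNReal.ofReal_le_ofReal (by gcongr)

lemma tsum_natCast_add_one_eq_top : ∑' n : ℕ, ((n + 1 : ℕ) : ℝ≥0∞) = ∞ := by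
  refine top_unique ((ENNReal.tsum_const_eq_top_of_ne_zero (α := ℕ) one_ne_zero).ge.trans ?_)
  exact ENNReal.tsum_le_tsum fun n => by simp

theorem stmt_0_general {f : ℝ → ℝ≥0∞} {l b : ℝ}
    (hfin : ∀ x ∈ Ioo l b, ∫⁻ y in Ioc x b, f y ≠ ∞) (htop : ∫⁻ x in Ioo l b, f x = ∞)
    {c : ℕ → ℝ≥0∞} (hc₀ : ∀ n, c n ≠ 0) (hc : ∀ n, c n ≠ ∞) (hsum : ∑' n, c n = ∞) :
    ∃ a : ℕ → ℝ, a 0 = b ∧ StrictAnti a ∧ (∀ n, l < a n) ∧ Tendsto a atTop (𝓝 l) ∧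
      ∀ n, ∫⁻ x in Ioc (a (n + 1)) (a n), f x = c n := by
  simp only [← withDensity_apply f measurableSet_Ioc] at hfin ⊢
  have htop' : volume.withDensity f (Ioc l b) = ∞ := by
    rwa [withDensity_apply f measurableSet_Ioc, ← restrict_Ioo_eq_restrict_Ioc]
  apply exists_strictAnti_tendsto_measure_Ioc_eq hc₀
  · exact fun n => htop' ▸ ENNReal.sum_lt_top.2 fun i _ => (hc i).lt_top
  · exact fun x hx => hsum ▸ (hfin x hx).lt_top

/-- existence of the Yamada–Watanabe sequence `(a_n)` for a strictly
increasing `h : [0,∞) → [0,∞)` with `h 0 = 0` whose inverse square is non-integrable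
at the origin. -/
theorem stmt_0 (h : ℝ → ℝ)
    (h_nonneg : ∀ x, 0 ≤ x → 0 ≤ h x)
    (h_mono : StrictMonoOn h (Set.Ici 0))
    (h_zero : h 0 = 0)
    (h_int : ∀ ε > (0 : ℝ),
      ∫⁻ x in Set.Ioo 0 ε, ENNReal.ofReal (((h x) ^ 2)⁻¹) = ⊤) :
    ∃ a : ℕ → ℝ, a 0 = 1 ∧ StrictAnti a ∧ (∀ n, 0 < a n) ∧
      Tendsto a atTop (𝓝 0) ∧
      ∀ n : ℕ, ∫⁻ x in Set.Ioc (a (n + 1)) (a n),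
        ENNReal.ofReal (((h x) ^ 2)⁻¹) = (n + 1 : ℕ) := by
  refine stmt_0_general (fun x hx => setLIntegral_Ioc_inv_pow_ne_top ?_ ?_ 2) (h_int 1 one_pos)
    (fun n => by simp) (fun n => ENNReal.natCast_ne_top _) tsum_natCast_add_one_eq_top
  · exact h_mono.monotoneOn.mono (Icc_subset_Ici_self.trans (Ici_subset_Ici.2 hx.1.le))
  · simpa only [h_zero] using h_mono self_mem_Ici hx.1.le hx.1
end

section
/- Let δ₁ > 0, β₁ > 0, σ > 0, a ∈ ℝ and t' > 0. Define u : [0,t'] × ℝ → ℝ by u(t,x) = δ₁²/β₁² + δ₁σ²a²/(2β₁²) + e^{−β₁(t'−t)}·((σ²a² + 2δ₁)/β₁)·(x − δ₁/β₁) + e^{−2β₁(t'−t)}·[ (x − δ₁/β₁)² + (σ²a²/(2β₁))·(δ₁/β₁ − 2x) ]. Then u(t', x) = x² for all x ∈ ℝ, the second space derivative is ∂²_x u(t,x) = 2e^{−2β₁(t'−t)} > 0, and u satisfies the linear parabolic PDE ∂_t u(t,x) + (δ₁ − β₁ x)·∂_x u(t,x) + (σ²a²/2)·x·∂²_x u(t,x)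 = 0 for all (t,x) ∈ [0,t'] × ℝ. -/
open MeasureTheory Filter Topology

/-!
The operator `L f = (δ - β x) f' + κ x f''` has the polynomial eigenfunctions `1`, `x - δ/β` and
`(x - δ/β)² + (κ/β)(δ/β - 2x)` with eigenvalues `0`, `-β` and `-2β`. An eigenfunction `φ` with
eigenvalue `-r` gives the separated solution `e^{-r(T-t)} φ(x)` of `∂_t u + L u = 0`, and `u` is
the superposition of the three separated solutions whose values at `t = T` add up to `x²`.
-/

section Quadratic

variable {𝕜 : Type*} [NontriviallyNormedField 𝕜]

theorem deriv_quadratic (a b c : 𝕜) :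
    deriv (fun x => a * x ^ 2 + b * x + c) = fun x => 2 * a * x + b := by
  funext x
  have h_sq : HasDerivAt (fun x : 𝕜 => x ^ 2) (2 * x) x := by simpa using hasDerivAt_pow 2 x
  have h := ((h_sq.const_mul a).add ((hasDerivAt_id x).const_mul b)).add_const c
  exact (h.congr_deriv (by ring)).deriv

theorem deriv_deriv_quadratic (a b c x : 𝕜) :
    deriv (deriv fun x => a * x ^ 2 + b * x + c) x = 2 * a := by
  rw [deriv_quadratic, deriv_add_const, deriv_const_mul_field, deriv_id'', mul_one]

end Quadratic

section Generator

/-- The generator `f ↦ μ f' + ν f''` of a one-dimensional diffusion with drift `μ`. The coefficient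
`ν` is half the squared volatility. -/
noncomputable def diffusionGenerator (μ ν f : ℝ → ℝ) (x : ℝ) : ℝ :=
  μ x * deriv f x + ν x * deriv (deriv f) x

variable {μ ν f g : ℝ → ℝ}

theorem diffusionGenerator_const (c x : ℝ) : diffusionGenerator μ ν (fun _ => c) x = 0 := by
  simp [diffusionGenerator]

theorem diffusionGenerator_const_mul (c x : ℝ) :
    diffusionGenerator μ ν (fun y => c * f y) x = c * diffusionGenerator μ ν f x := by
  simp only [diffusionGenerator, deriv_const_mul_field']
  ring

theorem diffusionGenerator_add (hf : ContDiff ℝ 2 f) (hg : ContDiff ℝ 2 g) (x : ℝ) :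
    diffusionGenerator μ ν (fun y => f y + g y) x =
      diffusionGenerator μ ν f x + diffusionGenerator μ ν g x := by
  have h_deriv : deriv (fun y => f y + g y) = fun y => deriv f y + deriv g y := funext fun y =>
    deriv_fun_add (hf.differentiable two_ne_zero y) (hg.differentiable two_ne_zero y)
  have h_deriv_deriv : deriv (deriv fun y => f y + g y) x =
      deriv (deriv f) x + deriv (deriv g) x := by
    rw [h_deriv]
    exact deriv_fun_add (hf.differentiable_deriv_two x) (hg.differentiable_deriv_two x)
  rw [diffusionGenerator, h_deriv_deriv, h_deriv, diffusionGenerator, diffusionGenerator]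
  ring

theorem diffusionGenerator_quadratic (a b c x : ℝ) :
    diffusionGenerator μ ν (fun y => a * y ^ 2 + b * y + c) x =
      μ x * (2 * a * x + b) + ν x * (2 * a) := by
  rw [diffusionGenerator, deriv_deriv_quadratic, deriv_quadratic]

end Generator

/-- Classical solutions on `ℝ × ℝ` of the backward Kolmogorov equation `∂_t u + L u = 0`, where
`L` is the generator `diffusionGenerator μ ν` acting on the space variable. The first argument of
`u` is time. -/
structure IsBackwardSolution (μ ν : ℝ → ℝ) (u : ℝ → ℝ → ℝ) : Prop where
  differentiable_time : ∀ x, Differentiable ℝ fun t => u t x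
  contDiff_space : ∀ t, ContDiff ℝ 2 (u t)
  deriv_add_generator : ∀ t x, deriv (fun s => u s x) t + diffusionGenerator μ ν (u t) x = 0

namespace IsBackwardSolution

variable {μ ν : ℝ → ℝ}

theorem const (c : ℝ) : IsBackwardSolution μ ν fun _ _ => c where
  differentiable_time _ := differentiable_const c
  contDiff_space _ := contDiff_const
  deriv_add_generator t x := by simp only [deriv_const, diffusionGenerator_const, add_zero]

theorem add {u v : ℝ → ℝ → ℝ} (hu : IsBackwardSolution μ ν u) (hv : IsBackwardSolution μ ν v) :
    IsBackwardSolution μ ν fun t x => u t x + v t x where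
  differentiable_time x := (hu.differentiable_time x).add (hv.differentiable_time x)
  contDiff_space t := (hu.contDiff_space t).add (hv.contDiff_space t)
  deriv_add_generator t x := by
    rw [deriv_fun_add (hu.differentiable_time x t) (hv.differentiable_time x t),
      diffusionGenerator_add (hu.contDiff_space t) (hv.contDiff_space t)]
    linear_combination hu.deriv_add_generator t x + hv.deriv_add_generator t x

theorem exp_mul_eigenfunction {φ : ℝ → ℝ} {r : ℝ} (hφ : ContDiff ℝ 2 φ)
    (h_eigen : ∀ x, diffusionGenerator μ ν φ x = -r * φ x) (T : ℝ) :
    IsBackwardSolution μ ν fun t x => Real.exp (-r * (T - t)) * φ x where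
  differentiable_time _ := by fun_prop
  contDiff_space _ := contDiff_const.mul hφ
  deriv_add_generator t x := by
    have h_exp : HasDerivAt (fun s => Real.exp (-r * (T - s)))
        (Real.exp (-r * (T - t)) * (-r * -1)) t :=
      (((hasDerivAt_id t).const_sub T).const_mul (-r)).exp
    rw [(h_exp.mul_const (φ x)).deriv, diffusionGenerator_const_mul, h_eigen]
    ring

end IsBackwardSolution

section CoxIngersollRoss

variable {δ β : ℝ}

theorem diffusionGenerator_centered_linear (ν : ℝ → ℝ) (hβ : β ≠ 0) (c x : ℝ) :
    diffusionGenerator (fun y => δ - β * y) ν (fun y => c * (y - δ / β)) x =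
      -β * (c * (x - δ / β)) := by
  have h_affine : (fun y => c * (y - δ / β)) = fun y => 0 * y ^ 2 + c * y + -(c * (δ / β)) := by
    funext y
    ring
  rw [h_affine, diffusionGenerator_quadratic]
  field_simp
  ring

/-- The monic quadratic eigenfunction of the Cox–Ingersoll–Ross generator
`f ↦ (δ - β x) f' + κ x f''`; its eigenvalue is `-2β`. -/
noncomputable def cirQuadratic (δ β κ x : ℝ) : ℝ :=
  (x - δ / β) ^ 2 + κ / β * (δ / β - 2 * x)

theorem cirQuadratic_eq_quadratic (δ β κ x : ℝ) :
    cirQuadratic δ β κ x =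
      1 * x ^ 2 + -(2 * (δ + κ) / β) * x + (δ ^ 2 + δ * κ) / β ^ 2 := by
  rw [cirQuadratic]
  ring

theorem contDiff_cirQuadratic (δ β κ : ℝ) : ContDiff ℝ 2 (cirQuadratic δ β κ) := by
  unfold cirQuadratic
  fun_prop

theorem diffusionGenerator_cirQuadratic (hβ : β ≠ 0) (κ x : ℝ) :
    diffusionGenerator (fun y => δ - β * y) (fun y => κ * y) (cirQuadratic δ β κ) x =
      -(2 * β) * cirQuadratic δ β κ x := by
  rw [funext (cirQuadratic_eq_quadratic δ β κ), diffusionGenerator_quadratic]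
  field_simp
  ring

/-- The solution with terminal value `x²` at time `T` of the backward equation of the
Cox–Ingersoll–Ross generator `f ↦ (δ - β x) f' + κ x f''`. For `δ, κ, x ≥ 0` and `t ≤ T` it is
the conditional second moment `𝔼[X_T² | X_t = x]`. -/
noncomputable def cirSecondMoment (δ β κ T t x : ℝ) : ℝ :=
  (δ ^ 2 + δ * κ) / β ^ 2 + Real.exp (-β * (T - t)) * (2 * (δ + κ) / β * (x - δ / β))
    + Real.exp (-(2 * β) * (T - t)) * cirQuadratic δ β κ x

theorem cirSecondMoment_terminal (δ β κ T x : ℝ) : cirSecondMoment δ β κ T T x = x ^ 2 := by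
  simp only [cirSecondMoment, cirQuadratic_eq_quadratic, sub_self, mul_zero, Real.exp_zero]
  ring

theorem deriv_deriv_cirSecondMoment (δ β κ T t x : ℝ) :
    deriv (deriv (cirSecondMoment δ β κ T t)) x = 2 * Real.exp (-(2 * β) * (T - t)) := by
  set E := Real.exp (-β * (T - t)) with hE
  set F := Real.exp (-(2 * β) * (T - t)) with hF
  have h_quadratic : cirSecondMoment δ β κ T t = fun y =>
      F * y ^ 2 + (E - F) * (2 * (δ + κ) / β) * y +
        ((1 + F) * ((δ ^ 2 + δ * κ) / β ^ 2) - E * (2 * (δ + κ) / β * (δ / β))) := by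
    funext y
    rw [cirSecondMoment, cirQuadratic_eq_quadratic, ← hE, ← hF]
    ring
  rw [h_quadratic, deriv_deriv_quadratic]

theorem isBackwardSolution_cirSecondMoment (hβ : β ≠ 0) (κ T : ℝ) :
    IsBackwardSolution (fun x => δ - β * x) (fun x => κ * x) (cirSecondMoment δ β κ T) :=
  ((IsBackwardSolution.const _).add
    (.exp_mul_eigenfunction (by fun_prop)
      (diffusionGenerator_centered_linear _ hβ _) T)).add
    (.exp_mul_eigenfunction (contDiff_cirQuadratic δ β κ)
      (diffusionGenerator_cirQuadratic hβ κ) T)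

end CoxIngersollRoss

theorem stmt_10_general (δ₁ β₁ σ a t' : ℝ) (hβ : β₁ ≠ 0)
    (u : ℝ → ℝ → ℝ)
    (hu : ∀ t x, u t x =
      δ₁ ^ 2 / β₁ ^ 2 + δ₁ * σ ^ 2 * a ^ 2 / (2 * β₁ ^ 2)
      + Real.exp (-β₁ * (t' - t)) * ((σ ^ 2 * a ^ 2 + 2 * δ₁) / β₁) * (x - δ₁ / β₁)
      + Real.exp (-2 * β₁ * (t' - t)) *
          ((x - δ₁ / β₁) ^ 2 + (σ ^ 2 * a ^ 2 / (2 * β₁)) * (δ₁ / β₁ - 2 * x))) :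
    (∀ x, u t' x = x ^ 2) ∧
    (∀ t x, deriv (deriv (u t)) x = 2 * Real.exp (-2 * β₁ * (t' - t)) ∧
      0 < deriv (deriv (u t)) x) ∧
    (∀ t x, deriv (fun s => u s x) t + (δ₁ - β₁ * x) * deriv (u t) x
        + (σ ^ 2 * a ^ 2 / 2) * x * deriv (deriv (u t)) x = 0) := by
  obtain rfl : u = cirSecondMoment δ₁ β₁ (σ ^ 2 * a ^ 2 / 2) t' := by
    funext t x
    rw [hu, cirSecondMoment, cirQuadratic, neg_mul 2 β₁]
    ring
  refine ⟨cirSecondMoment_terminal _ _ _ _, fun t x => ?_, fun t x => ?_⟩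
  · rw [deriv_deriv_cirSecondMoment, neg_mul 2 β₁]
    exact ⟨rfl, by positivity⟩
  · rw [add_assoc]
    exact (isBackwardSolution_cirSecondMoment hβ _ t').deriv_add_generator t x

/-- the explicit function `u` solves the linear parabolic PDE
`∂_t u + (δ₁ - β₁ x) ∂_x u + (σ²a²/2) x ∂²_x u = 0` with terminal value `x²`,
and `∂²_x u = 2 e^{-2β₁(t'-t)} > 0`. -/
theorem stmt_10 (δ₁ β₁ σ a t' : ℝ)
    (hδ : 0 < δ₁) (hβ : 0 < β₁) (hσ : 0 < σ) (ht' : 0 < t')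
    (u : ℝ → ℝ → ℝ)
    (hu : ∀ t x, u t x =
      δ₁ ^ 2 / β₁ ^ 2 + δ₁ * σ ^ 2 * a ^ 2 / (2 * β₁ ^ 2)
      + Real.exp (-β₁ * (t' - t)) * ((σ ^ 2 * a ^ 2 + 2 * δ₁) / β₁) * (x - δ₁ / β₁)
      + Real.exp (-2 * β₁ * (t' - t)) *
          ((x - δ₁ / β₁) ^ 2 + (σ ^ 2 * a ^ 2 / (2 * β₁)) * (δ₁ / β₁ - 2 * x))) :
    (∀ x, u t' x = x ^ 2) ∧
    (∀ t x, deriv (deriv (u t)) x = 2 * Real.exp (-2 * β₁ * (t' - t)) ∧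
      0 < deriv (deriv (u t)) x) ∧
    (∀ t ∈ Set.Icc (0 : ℝ) t', ∀ x : ℝ,
      deriv (fun s => u s x) t + (δ₁ - β₁ * x) * deriv (u t) x
        + (σ ^ 2 * a ^ 2 / 2) * x * deriv (deriv (u t)) x = 0) := by
  obtain ⟨h_terminal, h_deriv_deriv, h_pde⟩ := stmt_10_general δ₁ β₁ σ a t' hβ.ne' u hu
  exact ⟨h_terminal, h_deriv_deriv, fun t _ => h_pde t⟩
end

section
/- Let δ₂ > 0, β₂ > 0, t' > 0 and 0 ≤ σ̲² < σ̄². Define u : [0,t'] × [0,∞) → ℝ by u(t,x) = (x − δ₂/β₂)·e^{σ̄² β₂ (t − t')} + δ₂/β₂ for 0 ≤ x ≤ δ₂/β₂ and u(t,x) = (x − δ₂/β₂)·e^{σ̲² β₂ (t − t')} + δ₂/β₂ for x ≥ δ₂/β₂. Fix t ∈ (0, t') and set x₀ = δ₂/β₂. Then there exist NO (p, q, X) ∈ ℝ³ such that u(t+h, x₀+y) ≤ u(t, x₀) + p·h + q·y + (1/2)·X·y² + o(|h| + y²) as (h,y) → (0,0) (with t+h ∈ [0,t'] and x₀+y ≥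 0); that is, the parabolic superjet P^{2,+}u(t, x₀) is empty. -/
open MeasureTheory Filter Topology

/-!
Along the slice of constant time, an element `(p, q, X)` of the superjet at `(t, x)` gives a
parabola of slope `q` touching `u t` from above at `x`: raising the curvature `X` by `2` absorbs the
error `o(y ^ 2)`. Hence `q` lies above the right derivative and below the left derivative of `u t`.
At `x = δ₂ / β₂` and `t < t'` this is impossible, since the right derivative
`exp (sl * β₂ * (t - t'))` exceeds the left derivative `exp (sb * β₂ * (t - t'))`: the kink is
strictly convex.
-/

/-- The parabolic superjet `P^{2,+} u (t, x)` of `u` relative to a domain `D` of time-space points: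
the triples `(p, q, X)` of a time slope, a space slope and a second space derivative whose Taylor
polynomial bounds `u` from above up to `o(|h| + y ^ 2)`, the error being read one-sidedly as the
positive part of the difference. -/
def parabolicSuperjet (D : Set (ℝ × ℝ)) (u : ℝ → ℝ → ℝ) (t x : ℝ) : Set (ℝ × ℝ × ℝ) :=
  {j | Tendsto
    (fun hy : ℝ × ℝ =>
      max (u (t + hy.1) (x + hy.2) - (u t x + j.1 * hy.1 + j.2.1 * hy.2 + j.2.2 * hy.2 ^ 2 / 2)) 0
        / (|hy.1| + hy.2 ^ 2))
    (𝓝[{hy : ℝ × ℝ | hy ≠ (0, 0) ∧ (t + hy.1, x + hy.2) ∈ D}] (0, 0)) (𝓝 0)}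

section Superjet

variable {D : Set (ℝ × ℝ)} {u : ℝ → ℝ → ℝ} {s : Set ℝ} {t x p q X a b v : ℝ}

lemma eventually_le_of_mem_parabolicSuperjet (hj : (p, q, X) ∈ parabolicSuperjet D u t x)
    (hs : ∀ᶠ z in 𝓝[s] x, (t, z) ∈ D) :
    ∀ᶠ z in 𝓝[s] x, u t z ≤ u t x + q * (z - x) + (X / 2 + 1) * (z - x) ^ 2 := by
  have hslice : Tendsto (fun z => ((0 : ℝ), z - x)) (𝓝 x) (𝓝 (0, 0)) := by
    have hcont : Continuous fun z => ((0 : ℝ), z - x) := by fun_prop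
    simpa only [sub_self] using hcont.tendsto x
  have hquot := hslice.eventually
    (eventually_nhdsWithin_iff.mp (hj.eventually (eventually_lt_nhds one_pos)))
  filter_upwards [hs, hquot.filter_mono nhdsWithin_le_nhds] with z hzD hz
  rcases eq_or_ne z x with rfl | hne
  · simp
  · have hincr : ((0 : ℝ), z - x) ≠ (0, 0) := by simpa [sub_eq_zero] using hne
    have hlt := hz ⟨hincr, by simpa only [add_zero, add_sub_cancel] using hzD⟩
    have hsq : 0 < (z - x) ^ 2 := sq_pos_of_ne_zero (sub_ne_zero.mpr hne)
    simp only [add_zero, add_sub_cancel, mul_zero, abs_zero, zero_add, div_lt_one hsq] at hlt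
    linarith [(le_max_left _ _).trans_lt hlt]

lemma mul_deriv_le_of_mem_parabolicSuperjet (hj : (p, q, X) ∈ parabolicSuperjet D u t x)
    (hs : ∀ᶠ z in 𝓝[s] x, (t, z) ∈ D) (hderiv : HasDerivWithinAt (u t) a s x)
    (hv : v ∈ posTangentConeAt s x) : v * a ≤ v * q := by
  let gap : ℝ → ℝ := fun z => u t z - (q * (z - x) + (X / 2 + 1) * (z - x) ^ 2)
  have hmax : IsLocalMaxOn gap s x := by
    filter_upwards [eventually_le_of_mem_parabolicSuperjet hj hs] with z hz
    simp only [gap, sub_self]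
    linarith
  have hgap : HasDerivWithinAt gap (a - q) s x := by
    have hsub : HasDerivWithinAt (fun z => z - x) 1 s x := (hasDerivWithinAt_id x s).sub_const x
    simpa using
      hderiv.fun_sub ((hsub.const_mul q).fun_add ((hsub.fun_pow 2).const_mul (X / 2 + 1)))
  have hnonpos : v * (a - q) ≤ 0 := by
    simpa using hmax.hasFDerivWithinAt_nonpos hgap.hasFDerivWithinAt hv
  linarith

lemma rightDeriv_le_of_mem_parabolicSuperjet (hj : (p, q, X) ∈ parabolicSuperjet D u t x)
    (hD : ∀ᶠ z in 𝓝[≥] x, (t, z) ∈ D) (hderiv : HasDerivWithinAt (u t) b (Set.Ici x) x) :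
    b ≤ q := by
  have hcone : (1 : ℝ) ∈ posTangentConeAt (Set.Ici x) x :=
    mem_posTangentConeAt_of_segment_subset <| (convex_Ici x).segment_subset (by simp) (by simp)
  linarith [mul_deriv_le_of_mem_parabolicSuperjet hj hD hderiv hcone]

lemma le_leftDeriv_of_mem_parabolicSuperjet (hj : (p, q, X) ∈ parabolicSuperjet D u t x)
    (hD : ∀ᶠ z in 𝓝[≤] x, (t, z) ∈ D) (hderiv : HasDerivWithinAt (u t) a (Set.Iic x) x) :
    q ≤ a := by
  have hcone : (-1 : ℝ) ∈ posTangentConeAt (Set.Iic x) x :=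
    mem_posTangentConeAt_of_segment_subset <| (convex_Iic x).segment_subset (by simp) (by simp)
  linarith [mul_deriv_le_of_mem_parabolicSuperjet hj hD hderiv hcone]

theorem parabolicSuperjet_eq_empty_of_leftDeriv_lt_rightDeriv
    (hD : ∀ᶠ z in 𝓝 x, (t, z) ∈ D) (hleft : HasDerivWithinAt (u t) a (Set.Iic x) x)
    (hright : HasDerivWithinAt (u t) b (Set.Ici x) x) (hab : a < b) :
    parabolicSuperjet D u t x = ∅ := by
  refine Set.eq_empty_of_forall_notMem fun ⟨p, q, X⟩ hj => hab.not_ge ?_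
  calc
    b ≤ q := rightDeriv_le_of_mem_parabolicSuperjet hj (hD.filter_mono nhdsWithin_le_nhds) hright
    _ ≤ a := le_leftDeriv_of_mem_parabolicSuperjet hj (hD.filter_mono nhdsWithin_le_nhds) hleft

end Superjet

lemma hasDerivWithinAt_of_eventuallyEq_affine {f : ℝ → ℝ} {s : Set ℝ} {x m c : ℝ} (hx : x ∈ s)
    (hf : ∀ᶠ z in 𝓝[s] x, f z = (z - x) * m + c) : HasDerivWithinAt f m s x := by
  have haffine : HasDerivWithinAt (fun z => (z - x) * m + c) m s x := by
    simpa using (((hasDerivWithinAt_id x s).sub_const x).mul_const m).add_const c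
  exact haffine.congr_of_eventuallyEq_of_mem hf hx

theorem stmt_15_general {δ₂ β₂ t' sl sb : ℝ} (hδ : 0 < δ₂) (hβ : 0 < β₂) (hslb : sl < sb)
    {u : ℝ → ℝ → ℝ}
    (hu1 : ∀ t ∈ Set.Icc 0 t', ∀ x, 0 ≤ x → x ≤ δ₂ / β₂ →
      u t x = (x - δ₂ / β₂) * Real.exp (sb * β₂ * (t - t')) + δ₂ / β₂)
    (hu2 : ∀ t ∈ Set.Icc 0 t', ∀ x, δ₂ / β₂ ≤ x →
      u t x = (x - δ₂ / β₂) * Real.exp (sl * β₂ * (t - t')) + δ₂ / β₂)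
    {t : ℝ} (ht : t ∈ Set.Ico 0 t') :
    parabolicSuperjet (Set.Icc 0 t' ×ˢ Set.Ici 0) u t (δ₂ / β₂) = ∅ := by
  have htIcc : t ∈ Set.Icc 0 t' := Set.Ico_subset_Icc_self ht
  have hnonneg : ∀ᶠ z in 𝓝 (δ₂ / β₂), 0 ≤ z := eventually_ge_nhds (div_pos hδ hβ)
  have hslopes : Real.exp (sb * β₂ * (t - t')) < Real.exp (sl * β₂ * (t - t')) :=
    Real.exp_lt_exp.mpr <|
      mul_lt_mul_of_neg_right (mul_lt_mul_of_pos_right hslb hβ) (sub_neg.mpr ht.2)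
  refine parabolicSuperjet_eq_empty_of_leftDeriv_lt_rightDeriv
    (hnonneg.mono fun _ hz => ⟨htIcc, hz⟩) ?_ ?_ hslopes
  · refine hasDerivWithinAt_of_eventuallyEq_affine (c := δ₂ / β₂) Set.self_mem_Iic ?_
    filter_upwards [self_mem_nhdsWithin, hnonneg.filter_mono nhdsWithin_le_nhds] with z hle hz
    exact hu1 t htIcc z hz hle
  · refine hasDerivWithinAt_of_eventuallyEq_affine (c := δ₂ / β₂) Set.self_mem_Ici ?_
    filter_upwards [self_mem_nhdsWithin] with z hge
    exact hu2 t htIcc z hge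

/-- the parabolic superjet of the piecewise function `u` at the kink
point `(t, δ₂/β₂)` (with `t` interior) is empty: no `(p,q,X)` satisfies the
one-sided second order Taylor upper bound. -/
theorem stmt_15 (δ₂ β₂ t' sl sb : ℝ)
    (hδ : 0 < δ₂) (hβ : 0 < β₂) (ht' : 0 < t')
    (hsl : 0 ≤ sl) (hslb : sl < sb)
    (u : ℝ → ℝ → ℝ)
    (hu1 : ∀ t x, 0 ≤ x → x ≤ δ₂ / β₂ →
      u t x = (x - δ₂ / β₂) * Real.exp (sb * β₂ * (t - t')) + δ₂ / β₂)
    (hu2 : ∀ t x, δ₂ / β₂ ≤ x →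
      u t x = (x - δ₂ / β₂) * Real.exp (sl * β₂ * (t - t')) + δ₂ / β₂)
    (t : ℝ) (ht : t ∈ Set.Ioo (0 : ℝ) t') :
    ¬ ∃ p q X : ℝ,
      Tendsto
        (fun hy : ℝ × ℝ =>
          max (u (t + hy.1) (δ₂ / β₂ + hy.2)
            - (u t (δ₂ / β₂) + p * hy.1 + q * hy.2 + X * hy.2 ^ 2 / 2)) 0
            / (|hy.1| + hy.2 ^ 2))
        (𝓝[{hy : ℝ × ℝ | hy ≠ (0, 0) ∧ t + hy.1 ∈ Set.Icc (0 : ℝ) t' ∧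
            0 ≤ δ₂ / β₂ + hy.2}] (0, 0))
        (𝓝 0) := by
  rintro ⟨p, q, X, hj⟩
  exact (stmt_15_general hδ hβ hslb (fun t _ => hu1 t) (fun t _ => hu2 t)
    (Set.Ioo_subset_Ico_self ht)).subset (show (p, q, X) ∈ _ from hj)
end

section
/- Let δ₂ > 0, β₂ > 0, t' > 0 and 0 ≤ σ̲² < σ̄². Define u : [0,t'] × [0,∞) → ℝ by u(t,x) = (x − δ₂/β₂)·e^{σ̄² β₂ (t − t')} + δ₂/β₂ for 0 ≤ x ≤ δ₂/β₂ and u(t,x) = (x − δ₂/β₂)·e^{σ̲² β₂ (t − t')} + δ₂/β₂ for x ≥ δ₂/β₂. Fix t ∈ (0, t') and set x₀ = δ₂/β₂. If (p, q, X) ∈ ℝ³ satisfies u(t+h, x₀+y) ≥ u(t, x₀) + p·h + q·y + (1/2)·X·y² + o(|h| + y²) as (h,y) → (0,0) (with t+h ∈ [0,t'] and x₀+y ≥ 0), i.e. (p,q,X) lies in the parabolic subjet P^{2,−}u(t, x₀), then p ≤ 0 and e^{σ̄² β₂ (t − t')} ≤ q ≤ e^{σ̲² β₂ (t − t')}. 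-/
open MeasureTheory Filter Topology

/-!
Along a ray `s ↦ (t + s * a, x + s * b)`, `s ≥ 0`, both the quadratic term and the error
`o(|h| + y ^ 2)` of a parabolic subjet are `o(s)`. Hence the linear part `p * a + q * b` is at most
the one-sided derivative of `u` along the ray. At the kink, the direction `(1, 0)` bounds `p` by
the derivative of the constant `s ↦ u s x₀`, and the directions `(0, -1)` and `(0, 1)` bound `q` by
the left and the right slope.
-/

section ParabolicSubjet

open Asymptotics Set

/-- The parabolic subjet `P^{2,-} u (t, x)` relative to the domain `D`: the triples `(p, q, X)` with
`u (t + h) (x + y) ≥ u t x + p * h + q * y + X * y ^ 2 / 2 + o(|h| + y ^ 2)` as `(h, y) → 0` with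
`(t + h, x + y) ∈ D`. The one-sided `o` says that the negative part of the difference of the two
sides is `o(|h| + y ^ 2)`. -/
def parabolicSubjet (D : Set (ℝ × ℝ)) (u : ℝ → ℝ → ℝ) (t x : ℝ) : Set (ℝ × ℝ × ℝ) :=
  {(p, q, X) | (fun hy : ℝ × ℝ ↦
      max (u t x + p * hy.1 + q * hy.2 + X * hy.2 ^ 2 / 2 - u (t + hy.1) (x + hy.2)) 0)
    =o[𝓝[{hy | (t + hy.1, x + hy.2) ∈ D}] (0, 0)] fun hy ↦ |hy.1| + hy.2 ^ 2}

variable {D : Set (ℝ × ℝ)} {u : ℝ → ℝ → ℝ} {t x p q X : ℝ}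

lemma mem_parabolicSubjet_iff_tendsto :
    (p, q, X) ∈ parabolicSubjet D u t x ↔
      Tendsto (fun hy : ℝ × ℝ ↦
          max (u t x + p * hy.1 + q * hy.2 + X * hy.2 ^ 2 / 2 - u (t + hy.1) (x + hy.2)) 0 /
            (|hy.1| + hy.2 ^ 2))
        (𝓝[{hy | hy ≠ (0, 0) ∧ (t + hy.1, x + hy.2) ∈ D}] (0, 0)) (𝓝 0) := by
  refine ⟨fun h ↦ (h.mono (nhdsWithin_mono _ fun _ hy ↦ hy.2)).tendsto_div_nhds_zero, fun h ↦ ?_⟩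
  have denom_pos : ∀ hy : ℝ × ℝ, hy ≠ (0, 0) → 0 < |hy.1| + hy.2 ^ 2 := by
    rintro ⟨k, y⟩ hne
    by_cases hk : k = 0
    · have hy : y ≠ 0 := fun hy ↦ hne (by rw [hk, hy])
      positivity
    · positivity
  -- At the origin both sides vanish, so it can be added back to the punctured neighbourhood.
  have punctured := (isLittleO_iff_tendsto' <| eventually_mem_nhdsWithin.mono
    fun hy hmem hzero ↦ absurd hzero (denom_pos hy hmem.1).ne').2 h
  refine (punctured.insert (by simp)).mono (nhdsWithin_mono _ fun hy hmem ↦ ?_)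
  exact or_iff_not_imp_left.2 fun hne ↦ ⟨hne, hmem⟩

lemma linearPart_le_of_hasDerivWithinAt_ray (hsub : (p, q, X) ∈ parabolicSubjet D u t x)
    {a b m : ℝ} (hD : ∀ᶠ s in 𝓝[>] (0 : ℝ), (t + s * a, x + s * b) ∈ D)
    (hm : HasDerivWithinAt (fun s ↦ u (t + s * a) (x + s * b)) m (Ici 0) 0) :
    p * a + q * b ≤ m := by
  have ray_tendsto : Tendsto (fun s : ℝ ↦ (s * a, s * b)) (𝓝[>] 0)
      (𝓝[{hy | (t + hy.1, x + hy.2) ∈ D}] (0, 0)) := by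
    refine tendsto_nhdsWithin_iff.2 ⟨Tendsto.mono_left ?_ nhdsWithin_le_nhds, hD⟩
    exact Continuous.tendsto' (by fun_prop) _ _ (by simp)
  have sq_isLittleO : (fun s : ℝ ↦ s ^ 2) =o[𝓝[>] 0] fun s ↦ s :=
    (isLittleO_pow_id one_lt_two).mono nhdsWithin_le_nhds
  have gauge_isBigO : (fun s : ℝ ↦ |s * a| + (s * b) ^ 2) =O[𝓝[>] 0] fun s ↦ s := by
    refine IsBigO.add (IsBigO.abs_left ?_) ?_
    · simpa only [mul_comm] using (isBigO_refl (fun s : ℝ ↦ s) _).const_mul_left a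
    · simpa only [mul_pow, mul_comm] using sq_isLittleO.isBigO.const_mul_left (b ^ 2)
  have subjet_error : (fun s ↦ max (u t x + p * (s * a) + q * (s * b) + X * (s * b) ^ 2 / 2
      - u (t + s * a) (x + s * b)) 0) =o[𝓝[>] 0] fun s ↦ s :=
    (hsub.comp_tendsto ray_tendsto).trans_isBigO gauge_isBigO
  have deriv_error : (fun s ↦ u (t + s * a) (x + s * b) - u t x - s * m) =o[𝓝[>] 0] fun s ↦ s := by
    simpa using
      (hasDerivWithinAt_iff_isLittleO.1 hm).mono (nhdsWithin_mono _ Ioi_subset_Ici_self)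
  have quadratic_error : (fun s ↦ X * b ^ 2 / 2 * s ^ 2) =o[𝓝[>] 0] fun s ↦ s :=
    sq_isLittleO.const_mul_left (X * b ^ 2 / 2)
  have error_tendsto := ((subjet_error.add deriv_error).sub quadratic_error).tendsto_div_nhds_zero
  refine sub_nonpos.1 (ge_of_tendsto error_tendsto ?_)
  filter_upwards [self_mem_nhdsWithin] with s (hs : 0 < s)
  rw [le_div_iff₀ hs]
  linarith [le_max_left (u t x + p * (s * a) + q * (s * b) + X * (s * b) ^ 2 / 2
    - u (t + s * a) (x + s * b)) 0]

theorem stmt_16_general {a b : ℝ → ℝ} {T x₀ c : ℝ} (hx₀ : 0 < x₀) (ht : t ∈ Ico 0 T)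
    (hleft : ∀ s x, 0 ≤ x → x ≤ x₀ → u s x = (x - x₀) * a s + c)
    (hright : ∀ s x, x₀ ≤ x → u s x = (x - x₀) * b s + c)
    (hsub : (p, q, X) ∈ parabolicSubjet (Icc 0 T ×ˢ Ici 0) u t x₀) :
    p ≤ 0 ∧ a t ≤ q ∧ q ≤ b t := by
  have affine_deriv (m : ℝ) : HasDerivWithinAt (fun s ↦ s * m + c) m (Ici 0) 0 := by
    simpa using (((hasDerivAt_id (0 : ℝ)).mul_const m).add_const c).hasDerivWithinAt
  have time_bound : p * 1 + q * 0 ≤ 0 := by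
    refine linearPart_le_of_hasDerivWithinAt_ray hsub ?_ ?_
    · filter_upwards [Ioo_mem_nhdsGT (sub_pos.2 ht.2)] with s hs
      exact ⟨⟨by linarith [ht.1, hs.1], by linarith [hs.2]⟩, by simpa using hx₀.le⟩
    · simpa [hright] using hasDerivWithinAt_const (0 : ℝ) (Ici 0) c
  have left_bound : p * 0 + q * (-1) ≤ -a t := by
    refine linearPart_le_of_hasDerivWithinAt_ray hsub ?_ ?_
    · filter_upwards [Ioo_mem_nhdsGT hx₀] with s hs
      exact ⟨by simpa using ⟨ht.1, ht.2.le⟩, by simpa using hs.2.le⟩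
    · refine (affine_deriv (-a t)).congr_of_eventuallyEq_of_mem ?_ self_mem_Ici
      filter_upwards [Icc_mem_nhdsGE hx₀] with s hs
      rw [hleft _ _ (by linarith [hs.2]) (by linarith [hs.1]), mul_zero, add_zero]
      ring
  have right_bound : p * 0 + q * 1 ≤ b t := by
    refine linearPart_le_of_hasDerivWithinAt_ray hsub ?_ ?_
    · filter_upwards [self_mem_nhdsWithin] with s (hs : 0 < s)
      exact ⟨by simpa using ⟨ht.1, ht.2.le⟩, by simpa using (add_pos hx₀ hs).le⟩
    · refine (affine_deriv (b t)).congr_of_mem (fun s hs ↦ ?_) self_mem_Ici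
      rw [hright _ _ (by simpa using hs), mul_zero, add_zero]
      ring
  exact ⟨by linarith, by linarith, by linarith⟩

end ParabolicSubjet

/-- any element `(p,q,X)` of the parabolic subjet of the piecewise
function `u` at the kink point `(t, δ₂/β₂)` satisfies `p ≤ 0` and
`e^{σ̄²β₂(t-t')} ≤ q ≤ e^{σ̲²β₂(t-t')}`. -/
theorem stmt_16 (δ₂ β₂ t' sl sb : ℝ)
    (hδ : 0 < δ₂) (hβ : 0 < β₂) (ht' : 0 < t')
    (hsl : 0 ≤ sl) (hslb : sl < sb)
    (u : ℝ → ℝ → ℝ)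
    (hu1 : ∀ t x, 0 ≤ x → x ≤ δ₂ / β₂ →
      u t x = (x - δ₂ / β₂) * Real.exp (sb * β₂ * (t - t')) + δ₂ / β₂)
    (hu2 : ∀ t x, δ₂ / β₂ ≤ x →
      u t x = (x - δ₂ / β₂) * Real.exp (sl * β₂ * (t - t')) + δ₂ / β₂)
    (t : ℝ) (ht : t ∈ Set.Ioo (0 : ℝ) t')
    (p q X : ℝ)
    (hsub : Tendsto
      (fun hy : ℝ × ℝ =>
        max (u t (δ₂ / β₂) + p * hy.1 + q * hy.2 + X * hy.2 ^ 2 / 2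
          - u (t + hy.1) (δ₂ / β₂ + hy.2)) 0
          / (|hy.1| + hy.2 ^ 2))
      (𝓝[{hy : ℝ × ℝ | hy ≠ (0, 0) ∧ t + hy.1 ∈ Set.Icc (0 : ℝ) t' ∧
          0 ≤ δ₂ / β₂ + hy.2}] (0, 0))
      (𝓝 0)) :
    p ≤ 0 ∧ Real.exp (sb * β₂ * (t - t')) ≤ q ∧
      q ≤ Real.exp (sl * β₂ * (t - t')) :=
  stmt_16_general (div_pos hδ hβ) (Set.Ioo_subset_Ico_self ht) hu1 hu2
    (mem_parabolicSubjet_iff_tendsto.2 hsub)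
end
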